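/- Let Q ⊂ ℝ^N be a bounded Lebesgue-measurable set, let p₁, …, p_N: Q → ℝ be measurable with 1 < p_i⁻ ≤ p_i(x) ≤ p_i⁺ < ∞ a.e. for each i, and let a = (a_1, …, a_N): Q × ℝ × ℝ^N → ℝ^N satisfy the growth, strict monotonicity and coercivity conditions. Fix k > 0 and let w_m, w: Q → ℝ be measurable with |w_m(x)| ≤ k for a.e. x, w_m → w a.e. in Q, and let v_m, v: Q → ℝ^N be measurable with sup_m ∫_Q Σ_{i=1}^N |v_{m,i}(x)|^{p_i(x)} dx < ∞ and ∫_Q Σ_{i=1}^N |v_i(x)|^{p_i(x)} dx < ∞. If lim_{m→∞} ∫_Q (a(x, w_m(x), v_m(x)) − a(x, w_m(x), v(x))) · (v_m(x) − v(x)) dx = 0, then along a subsequence v_m converges to v strongly in modular sense: for each i = 1, …, N, ∫_Q |v_{m,i}(x) − v_i(x)|^{p_i(x)} dx → 0 as m → ∞. -/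

import Mathlib

open MeasureTheory Filter ENNReal

/-- The conjugate exponent `q' = q / (q - 1)`. -/
noncomputable def conjExp (q : ℝ) : ℝ := q / (q - 1)

lemma young_delta {p pm pM δ u t : ℝ} (hpm : 1 < pm) (h1 : pm ≤ p) (h2 : p ≤ pM)
    (hδ : 0 < δ) (hδ1 : δ ≤ 1) (hu : 0 ≤ u) (ht : 0 ≤ t) :
    u * t ≤ δ * u ^ conjExp p + (δ ^ (-pM) + δ ^ (-conjExp pm)) * t ^ p ∧
    u * t ≤ (δ ^ (-pM) + δ ^ (-conjExp pm)) * u ^ conjExp p + δ * t ^ p := by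
  have hp1 : 1 < p := lt_of_lt_of_le hpm h1
  have hpq : p.HolderConjugate (conjExp p) := Real.HolderConjugate.conjExponent hp1
  have hq1 : 1 < conjExp p := hpq.symm.lt
  have hqle : conjExp p ≤ conjExp pm := by
    unfold conjExp
    rw [div_le_div_iff₀ (by linarith) (by linarith)]
    nlinarith
  have hy : ∀ x y : ℝ, 0 ≤ x → 0 ≤ y → x * y ≤ x ^ conjExp p + y ^ p := by
    intro x y hx hy
    have h := Real.young_inequality_of_nonneg hx hy hpq.symm
    have a1 : x ^ conjExp p / conjExp p ≤ x ^ conjExp p :=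
      div_le_self (Real.rpow_nonneg hx _) hq1.le
    have a2 : y ^ p / p ≤ y ^ p := div_le_self (Real.rpow_nonneg hy _) hp1.le
    linarith
  have hup := Real.rpow_nonneg hu (conjExp p)
  have htp := Real.rpow_nonneg ht p
  have hA := (Real.rpow_pos_of_pos hδ (-pM))
  have hB := (Real.rpow_pos_of_pos hδ (-conjExp pm))
  have small : ∀ r : ℝ, 1 < r → δ ^ r ≤ δ := fun r hr => by
    simpa using Real.rpow_le_rpow_of_exponent_ge hδ hδ1 hr.le
  have big : ∀ r s : ℝ, r ≤ s → (δ⁻¹) ^ r ≤ δ ^ (-s) := fun r s hrs => by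
    rw [Real.inv_rpow hδ.le, ← Real.rpow_neg hδ.le]
    exact Real.rpow_le_rpow_of_exponent_ge hδ hδ1 (by linarith)
  constructor
  · have h := hy (δ * u) (δ⁻¹ * t) (by positivity) (by positivity)
    rw [Real.mul_rpow hδ.le hu, Real.mul_rpow (by positivity) ht] at h
    have e : δ * u * (δ⁻¹ * t) = u * t := by field_simp
    rw [e] at h
    have b1 := mul_le_mul_of_nonneg_right (small _ hq1) hup
    have b2 := mul_le_mul_of_nonneg_right (big _ _ h2) htp
    nlinarith [mul_nonneg hB.le htp]
  · have h := hy (δ⁻¹ * u) (δ * t) (by positivity) (by positivity)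
    rw [Real.mul_rpow hδ.le ht, Real.mul_rpow (by positivity) hu] at h
    have e : δ⁻¹ * u * (δ * t) = u * t := by field_simp
    rw [e] at h
    have b1 := mul_le_mul_of_nonneg_right (small _ hp1) htp
    have b2 := mul_le_mul_of_nonneg_right (big _ _ hqle) hup
    nlinarith [mul_nonneg hA.le hup]

/-- `S ^ (1/q)` raised to `q`. -/
lemma root_conj {p S : ℝ} (hp : 1 < p) (hS : 0 ≤ S) :
    (S ^ (1 / conjExp p)) ^ conjExp p = S := by
  have hpq : p.HolderConjugate (conjExp p) := Real.HolderConjugate.conjExponent hp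
  rw [one_div, Real.rpow_inv_rpow hS hpq.symm.ne_zero]

lemma ptwise_lower {N : ℕ} (pm pM A : Fin N → ℝ) (hpm : ∀ i, 1 < pm i) (hA : ∀ i, 0 ≤ A i)
    (α : ℝ) (hα : 0 < α) :
    ∃ C : ℝ, 0 ≤ C ∧ ∀ (P c b b' ξ η : Fin N → ℝ), (∀ i, pm i ≤ P i ∧ P i ≤ pM i) →
      (∀ i, 0 ≤ c i) →
      (∀ i, |b i| ≤ A i * ((∑ j, |ξ j| ^ P j) ^ (1 / conjExp (P i)) + c i)) →
      (∀ i, |b' i| ≤ A i * ((∑ j, |η j| ^ P j) ^ (1 / conjExp (P i)) + c i)) →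
      α * ∑ i, |ξ i| ^ P i ≤ ∑ i, b i * ξ i →
      α * ∑ i, |η i| ^ P i ≤ ∑ i, b' i * η i →
      α / 2 * ∑ i, |ξ i| ^ P i ≤ ∑ i, (b i - b' i) * (ξ i - η i) +
        C * (∑ i, |η i| ^ P i + ∑ i, c i ^ conjExp (P i)) := by
  set T := ∑ i, A i with hT
  have hT0 : 0 ≤ T := Finset.sum_nonneg fun i _ => hA i
  obtain ⟨δ, hδ, hδ1, hδ2⟩ : ∃ δ : ℝ, 0 < δ ∧ δ ≤ 1 ∧ 3 * δ * T ≤ α / 2 := by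
    refine ⟨min 1 (α / (6 * (T + 1))), by positivity, min_le_left _ _, ?_⟩
    have h : min 1 (α / (6 * (T + 1))) ≤ α / (6 * (T + 1)) := min_le_right _ _
    have h' : α / (6 * (T + 1)) * (6 * (T + 1)) = α := by field_simp
    have h0 : 0 ≤ α / (6 * (T + 1)) := by positivity
    nlinarith
  set K : Fin N → ℝ := fun i => δ ^ (-pM i) + δ ^ (-conjExp (pm i)) with hK
  have hK0 : ∀ i, 0 ≤ K i := fun i => by
    simp only [hK]; positivity
  refine ⟨∑ i, A i * (1 + 4 * K i),
    Finset.sum_nonneg fun i _ => mul_nonneg (hA i) (by linarith [hK0 i]), ?_⟩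
  intro P c b b' ξ η hP hc hb hb' hξ hη
  set X := ∑ i, |ξ i| ^ P i with hX
  set Y := ∑ i, |η i| ^ P i with hY
  set Z := ∑ i, c i ^ conjExp (P i) with hZ
  have nX : ∀ i, 0 ≤ |ξ i| ^ P i := fun i => Real.rpow_nonneg (abs_nonneg _) _
  have nY : ∀ i, 0 ≤ |η i| ^ P i := fun i => Real.rpow_nonneg (abs_nonneg _) _
  have nZ : ∀ i, 0 ≤ c i ^ conjExp (P i) := fun i => Real.rpow_nonneg (hc i) _
  have hX0 : 0 ≤ X := Finset.sum_nonneg fun i _ => nX i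
  have hY0 : 0 ≤ Y := Finset.sum_nonneg fun i _ => nY i
  have hZ0 : 0 ≤ Z := Finset.sum_nonneg fun i _ => nZ i
  have lX : ∀ i, |ξ i| ^ P i ≤ X := fun i =>
    Finset.single_le_sum (f := fun i => |ξ i| ^ P i) (fun i _ => nX i) (Finset.mem_univ i)
  have lY : ∀ i, |η i| ^ P i ≤ Y := fun i =>
    Finset.single_le_sum (f := fun i => |η i| ^ P i) (fun i _ => nY i) (Finset.mem_univ i)
  have lZ : ∀ i, c i ^ conjExp (P i) ≤ Z := fun i =>
    Finset.single_le_sum (f := fun i => c i ^ conjExp (P i)) (fun i _ => nZ i)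
      (Finset.mem_univ i)
  have key : ∀ i, b i * η i + b' i * ξ i ≤
      A i * (3 * δ * X) + A i * (1 + 4 * K i) * (Y + Z) := by
    intro i
    have hp1 : 1 < P i := lt_of_lt_of_le (hpm i) (hP i).1
    have y1 := (young_delta (hpm i) (hP i).1 (hP i).2 hδ hδ1
      (Real.rpow_nonneg hX0 (1 / conjExp (P i))) (abs_nonneg (η i))).1
    have y2 := (young_delta (hpm i) (hP i).1 (hP i).2 hδ hδ1 (hc i) (abs_nonneg (η i))).1
    have y3 := (young_delta (hpm i) (hP i).1 (hP i).2 hδ hδ1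
      (Real.rpow_nonneg hY0 (1 / conjExp (P i))) (abs_nonneg (ξ i))).2
    have y4 := (young_delta (hpm i) (hP i).1 (hP i).2 hδ hδ1 (hc i) (abs_nonneg (ξ i))).2
    rw [root_conj hp1 hX0] at y1
    rw [root_conj hp1 hY0] at y3
    change _ ≤ _ + K i * _ at y1
    change _ ≤ _ + K i * _ at y2
    change _ ≤ K i * _ + _ at y3
    change _ ≤ K i * _ + _ at y4
    have z1 := mul_le_mul_of_nonneg_left (lY i) (hK0 i)
    have z2 := mul_le_mul_of_nonneg_left (lZ i) (hK0 i)
    have z3 := mul_le_mul_of_nonneg_left (lX i) hδ.le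
    have z4 : δ * c i ^ conjExp (P i) ≤ Z := by
      nlinarith [nZ i, lZ i]
    have kz := mul_nonneg (hK0 i) hZ0
    have ky := mul_nonneg (hK0 i) hY0
    have tot : (X ^ (1 / conjExp (P i)) + c i) * |η i| + (Y ^ (1 / conjExp (P i)) + c i) * |ξ i|
        ≤ 3 * δ * X + (1 + 4 * K i) * (Y + Z) := by
      nlinarith
    have e1 : b i * η i ≤ A i * (X ^ (1 / conjExp (P i)) + c i) * |η i| := by
      refine (le_abs_self _).trans ?_
      rw [abs_mul]
      exact mul_le_mul_of_nonneg_right (hb i) (abs_nonneg _)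
    have e2 : b' i * ξ i ≤ A i * (Y ^ (1 / conjExp (P i)) + c i) * |ξ i| := by
      refine (le_abs_self _).trans ?_
      rw [abs_mul]
      exact mul_le_mul_of_nonneg_right (hb' i) (abs_nonneg _)
    have := mul_le_mul_of_nonneg_left tot (hA i)
    linarith
  have hs := Finset.sum_le_sum fun i (_ : i ∈ Finset.univ) => key i
  simp only [Finset.sum_add_distrib, ← Finset.sum_mul] at hs
  have hexp : ∑ i, (b i - b' i) * (ξ i - η i) =
      ∑ i, b i * ξ i + ∑ i, b' i * η i - (∑ i, b i * η i + ∑ i, b' i * ξ i) := by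
    simp only [← Finset.sum_add_distrib, ← Finset.sum_sub_distrib]
    exact Finset.sum_congr rfl fun i _ => by ring
  rw [hexp]
  have hαY := mul_nonneg hα.le hY0
  have := mul_le_mul_of_nonneg_right hδ2 hX0
  nlinarith

lemma ptwise_upper {N : ℕ} (A : Fin N → ℝ) (hA : ∀ i, 0 ≤ A i)
    (P c b b' ξ η : Fin N → ℝ) (hP : ∀ i, 1 < P i) (hc : ∀ i, 0 ≤ c i)
    (hb : ∀ i, |b i| ≤ A i * ((∑ j, |ξ j| ^ P j) ^ (1 / conjExp (P i)) + c i))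
    (hb' : ∀ i, |b' i| ≤ A i * ((∑ j, |η j| ^ P j) ^ (1 / conjExp (P i)) + c i)) :
    |∑ i, (b i - b' i) * (ξ i - η i)| ≤ (∑ i, A i * 16) *
      (∑ i, |ξ i| ^ P i + (∑ i, |η i| ^ P i + ∑ i, c i ^ conjExp (P i))) := by
  set X := ∑ i, |ξ i| ^ P i with hX
  set Y := ∑ i, |η i| ^ P i with hY
  set Z := ∑ i, c i ^ conjExp (P i) with hZ
  have nX : ∀ i, 0 ≤ |ξ i| ^ P i := fun i => Real.rpow_nonneg (abs_nonneg _) _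
  have nY : ∀ i, 0 ≤ |η i| ^ P i := fun i => Real.rpow_nonneg (abs_nonneg _) _
  have nZ : ∀ i, 0 ≤ c i ^ conjExp (P i) := fun i => Real.rpow_nonneg (hc i) _
  have hX0 : 0 ≤ X := Finset.sum_nonneg fun i _ => nX i
  have hY0 : 0 ≤ Y := Finset.sum_nonneg fun i _ => nY i
  have hZ0 : 0 ≤ Z := Finset.sum_nonneg fun i _ => nZ i
  have lX : ∀ i, |ξ i| ^ P i ≤ X := fun i =>
    Finset.single_le_sum (f := fun i => |ξ i| ^ P i) (fun i _ => nX i) (Finset.mem_univ i)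
  have lY : ∀ i, |η i| ^ P i ≤ Y := fun i =>
    Finset.single_le_sum (f := fun i => |η i| ^ P i) (fun i _ => nY i) (Finset.mem_univ i)
  have lZ : ∀ i, c i ^ conjExp (P i) ≤ Z := fun i =>
    Finset.single_le_sum (f := fun i => c i ^ conjExp (P i)) (fun i _ => nZ i)
      (Finset.mem_univ i)
  refine (Finset.abs_sum_le_sum_abs _ _).trans ?_
  rw [Finset.sum_mul]
  refine Finset.sum_le_sum fun i _ => ?_
  have yg : ∀ u t : ℝ, 0 ≤ u → 0 ≤ t → u * t ≤ u ^ conjExp (P i) + 2 * t ^ P i := by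
    intro u t hu ht
    have := (young_delta (hP i) le_rfl le_rfl one_pos le_rfl hu ht).1
    simp only [Real.one_rpow] at this
    linarith
  have rx := Real.rpow_nonneg hX0 (1 / conjExp (P i))
  have ry := Real.rpow_nonneg hY0 (1 / conjExp (P i))
  have y1 := yg _ _ rx (abs_nonneg (ξ i))
  have y2 := yg _ _ rx (abs_nonneg (η i))
  have y3 := yg _ _ ry (abs_nonneg (ξ i))
  have y4 := yg _ _ ry (abs_nonneg (η i))
  have y5 := yg _ _ (hc i) (abs_nonneg (ξ i))
  have y6 := yg _ _ (hc i) (abs_nonneg (η i))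
  rw [root_conj (hP i) hX0] at y1 y2
  rw [root_conj (hP i) hY0] at y3 y4
  have tot : ((X ^ (1 / conjExp (P i)) + c i) + (Y ^ (1 / conjExp (P i)) + c i)) *
      (|ξ i| + |η i|) ≤ 16 * (X + (Y + Z)) := by
    nlinarith [lX i, lY i, lZ i]
  have e1 : |b i - b' i| ≤
      A i * ((X ^ (1 / conjExp (P i)) + c i) + (Y ^ (1 / conjExp (P i)) + c i)) := by
    have := abs_sub (b i) (b' i)
    linarith [hb i, hb' i]
  rw [abs_mul]
  calc |b i - b' i| * |ξ i - η i| ≤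
      (A i * ((X ^ (1 / conjExp (P i)) + c i) + (Y ^ (1 / conjExp (P i)) + c i))) *
        (|ξ i| + |η i|) :=
        mul_le_mul e1 (abs_sub _ _) (abs_nonneg _) ((abs_nonneg _).trans e1)
    _ ≤ A i * (16 * (X + (Y + Z))) := by
        rw [mul_assoc]; exact mul_le_mul_of_nonneg_left tot (hA i)
    _ = _ := by ring

lemma ptwise_diff {p pM x y : ℝ} (hp : 1 < p) (hpM : p ≤ pM) :
    |x - y| ^ p ≤ 2 ^ pM * (|x| ^ p + |y| ^ p) := by
  have h1 : |x - y| ≤ 2 * max |x| |y| := by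
    have := abs_sub x y
    linarith [le_max_left |x| |y|, le_max_right |x| |y|]
  have hx := Real.rpow_nonneg (abs_nonneg x) p
  have hy := Real.rpow_nonneg (abs_nonneg y) p
  have hm : 0 ≤ max |x| |y| := le_max_of_le_left (abs_nonneg x)
  have h2 : (max |x| |y|) ^ p ≤ |x| ^ p + |y| ^ p := by
    rcases max_choice |x| |y| with h | h <;> rw [h] <;> linarith
  calc |x - y| ^ p ≤ (2 * max |x| |y|) ^ p :=
        Real.rpow_le_rpow (abs_nonneg _) h1 (by linarith)
    _ = 2 ^ p * (max |x| |y|) ^ p := Real.mul_rpow (by norm_num) hm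
    _ ≤ 2 ^ pM * (|x| ^ p + |y| ^ p) := by
        refine mul_le_mul (Real.rpow_le_rpow_of_exponent_le (by norm_num) hpM) h2
          (Real.rpow_nonneg hm _) (by positivity)

/-- Pointwise convergence of the fields. -/
lemma ptwise_tendsto {N : ℕ} (g : ℝ → (Fin N → ℝ) → (Fin N → ℝ))
    (hg : Continuous (fun sξ : ℝ × (Fin N → ℝ) => g sξ.1 sξ.2))
    (hmono : ∀ (s : ℝ) (ξ ξ' : Fin N → ℝ), ξ ≠ ξ' →
      0 < ∑ i, (g s ξ i - g s ξ' i) * (ξ i - ξ' i))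
    (P : Fin N → ℝ) (hP : ∀ i, 1 < P i)
    (s : ℕ → ℝ) (s0 : ℝ) (hs : Tendsto s atTop (nhds s0))
    (ξ : ℕ → Fin N → ℝ) (η : Fin N → ℝ)
    (hD : Tendsto (fun m => ∑ i, (g (s m) (ξ m) i - g (s m) η i) * (ξ m i - η i))
      atTop (nhds 0))
    (R β : ℝ) (hβ : 0 < β)
    (hbd : ∀ m, β * ∑ i, |ξ m i| ^ P i ≤
      ∑ i, (g (s m) (ξ m) i - g (s m) η i) * (ξ m i - η i) + R) :
    Tendsto ξ atTop (nhds η) := by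
  obtain ⟨M, hM⟩ := hD.bddAbove_range
  have hball : ∀ m, ξ m ∈ Metric.closedBall (0 : Fin N → ℝ) (1 + |M + R| / β) := by
    intro m
    rw [mem_closedBall_zero_iff, pi_norm_le_iff_of_nonneg (by positivity)]
    intro i
    have h1 : β * |ξ m i| ^ P i ≤ |M + R| := by
      have l : |ξ m i| ^ P i ≤ ∑ i, |ξ m i| ^ P i :=
        Finset.single_le_sum (f := fun i => |ξ m i| ^ P i)
          (fun i _ => Real.rpow_nonneg (abs_nonneg _) _) (Finset.mem_univ i)
      have := mul_le_mul_of_nonneg_left l hβ.le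
      have h3 := hM (Set.mem_range_self m)
      have h4 := hbd m
      have h5 := le_abs_self (M + R)
      linarith
    have h2 : |ξ m i| ^ P i ≤ |M + R| / β := by
      rw [le_div_iff₀ hβ]; linarith
    rw [Real.norm_eq_abs]
    rcases le_total |ξ m i| 1 with h | h
    · have : 0 ≤ |M + R| / β := by positivity
      linarith
    · have : |ξ m i| ^ (1 : ℝ) ≤ |ξ m i| ^ P i := Real.rpow_le_rpow_of_exponent_le h (hP i).le
      rw [Real.rpow_one] at this
      linarith
  refine tendsto_of_subseq_tendsto fun ns hns => ?_
  obtain ⟨ζ, -, ms, hms, hζ⟩ := (isCompact_closedBall (0 : Fin N → ℝ)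
    (1 + |M + R| / β)).tendsto_subseq (fun n => hball (ns n))
  refine ⟨ms, ?_⟩
  have hsub : Tendsto (fun n => ns (ms n)) atTop atTop := hns.comp hms.tendsto_atTop
  have hs' : Tendsto (fun n => s (ns (ms n))) atTop (nhds s0) := hs.comp hsub
  have hζ' : Tendsto (fun n => ξ (ns (ms n))) atTop (nhds ζ) := hζ
  have t1 : Tendsto (fun n => g (s (ns (ms n))) (ξ (ns (ms n)))) atTop (nhds (g s0 ζ)) :=
    (hg.tendsto (s0, ζ)).comp (hs'.prodMk_nhds hζ')
  have t2 : Tendsto (fun n => g (s (ns (ms n))) η) atTop (nhds (g s0 η)) :=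
    (hg.tendsto (s0, η)).comp (hs'.prodMk_nhds tendsto_const_nhds)
  rw [tendsto_pi_nhds] at t1 t2
  have t3 := tendsto_pi_nhds.1 hζ'
  have t4 : Tendsto (fun n => ∑ i, (g (s (ns (ms n))) (ξ (ns (ms n))) i
      - g (s (ns (ms n))) η i) * (ξ (ns (ms n)) i - η i)) atTop
      (nhds (∑ i, (g s0 ζ i - g s0 η i) * (ζ i - η i))) :=
    tendsto_finsetSum _ fun i _ => ((t1 i).sub (t2 i)).mul ((t3 i).sub tendsto_const_nhds)
  have t5 := tendsto_nhds_unique t4 (hD.comp hsub)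
  have : ζ = η := by
    by_contra hne
    exact (hmono s0 ζ η hne).ne' t5
  rw [← this]
  exact hζ'

/-- Measurability of Carathéodory compositions. -/
lemma carath_meas {N : ℕ} (μ : Measure (Fin N → ℝ))
    (a : (Fin N → ℝ) → ℝ → (Fin N → ℝ) → (Fin N → ℝ))
    (ha_meas : ∀ (s : ℝ) (ξ : Fin N → ℝ), Measurable (fun x => a x s ξ))
    (ha_cont : ∀ᵐ x ∂μ, Continuous (fun sξ : ℝ × (Fin N → ℝ) => a x sξ.1 sξ.2))
    (w : (Fin N → ℝ) → ℝ) (hw : Measurable w)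
    (v : (Fin N → ℝ) → Fin N → ℝ) (hv : Measurable v) :
    AEMeasurable (fun x => a x (w x) (v x)) μ := by
  classical
  obtain ⟨t, hst, ht, ht0⟩ := exists_measurable_superset_of_null (ae_iff.1 ha_cont)
  let u : ℝ × (Fin N → ℝ) → (Fin N → ℝ) → (Fin N → ℝ) :=
    fun sξ x => if x ∈ t then 0 else a x sξ.1 sξ.2
  have hu : Measurable (Function.uncurry u) := by
    refine measurable_uncurry_of_continuous_of_measurable (fun x => ?_) (fun i => ?_)
    · by_cases hx : x ∈ t
      · simp only [u, hx, if_true]; exact continuous_const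
      · simp only [u, hx, if_false]
        by_contra hcon
        exact hx (hst hcon)
    · exact Measurable.ite ht measurable_const (ha_meas _ _)
  have hm : Measurable (fun x => u (w x, v x) x) :=
    hu.comp ((hw.prodMk hv).prodMk measurable_id)
  refine ⟨_, hm, ?_⟩
  have : ∀ᵐ x ∂μ, x ∉ t := measure_eq_zero_iff_ae_notMem.1 ht0
  filter_upwards [this] with x hx
  simp only [u, hx, if_false]

/-- Generalized dominated convergence. -/
lemma gen_dom {X : Type*} [MeasurableSpace X] (μ : Measure X)
    (f : ℕ → X → ℝ≥0∞) (hf : ∀ m, AEMeasurable (f m) μ)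
    (g : ℕ → X → ℝ≥0∞) (hg : ∀ m, AEMeasurable (g m) μ)
    (h : X → ℝ≥0∞) (hh : Measurable h) (hfin : ∫⁻ x, h x ∂μ ≠ ⊤)
    (hle : ∀ m, ∀ᵐ x ∂μ, f m x ≤ g m x + h x)
    (hg0 : Tendsto (fun m => ∫⁻ x, g m x ∂μ) atTop (nhds 0))
    (hf0 : ∀ᵐ x ∂μ, Tendsto (fun m => f m x) atTop (nhds 0)) :
    Tendsto (fun m => ∫⁻ x, f m x ∂μ) atTop (nhds 0) := by
  have h1 : Tendsto (fun m => ∫⁻ x, min (f m x) (h x) ∂μ) atTop (nhds (∫⁻ _, 0 ∂μ)) := by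
    refine tendsto_lintegral_of_dominated_convergence' h
      (fun m => (hf m).min hh.aemeasurable) (fun m => ?_) hfin ?_
    · exact Eventually.of_forall fun x => min_le_right _ _
    · filter_upwards [hf0] with x hx
      exact tendsto_of_tendsto_of_tendsto_of_le_of_le tendsto_const_nhds hx
        (fun _ => zero_le) (fun _ => min_le_left _ _)
  rw [lintegral_zero] at h1
  have h2 := hg0.add h1
  rw [add_zero] at h2
  refine tendsto_of_tendsto_of_tendsto_of_le_of_le tendsto_const_nhds h2
    (fun _ => zero_le) (fun m => ?_)
  simp only
  rw [← lintegral_add_left' (hg m)]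
  refine lintegral_mono_ae ?_
  filter_upwards [hle m] with x hx
  rcases le_total (f m x) (h x) with h' | h'
  · rw [min_eq_left h']; exact le_add_self
  · rw [min_eq_right h']; exact hx

lemma integrable_of_nonneg_lintegral {X : Type*} [MeasurableSpace X] {μ : Measure X}
    {f : X → ℝ} (hf : Measurable f) (h0 : ∀ᵐ x ∂μ, 0 ≤ f x)
    (hfin : ∫⁻ x, ENNReal.ofReal (f x) ∂μ < ⊤) : Integrable f μ :=
  ⟨hf.aestronglyMeasurable, (hasFiniteIntegral_iff_ofReal h0).2 hfin⟩

/-- second conclusion of Lemma 2.2 of the paper: modular (strong) convergence of the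
(abstract) gradients.  Under the Leray–Lions structure conditions (growth, strict
monotonicity, coercivity) on `a`, if `w m → w` a.e. with `|w m| ≤ k`, the fields `v m`
are bounded in the anisotropic modular, and
`∫_Q (a(x, w m, v m) − a(x, w m, v))·(v m − v) → 0`, then along a subsequence
`v m → v` a.e. in `Q`. -/
theorem stmt_3 {N : ℕ} (Q : Set (Fin N → ℝ)) (hQmeas : MeasurableSet Q)
    (hQbd : Bornology.IsBounded Q)
    (p : Fin N → (Fin N → ℝ) → ℝ) (hp : ∀ i, Measurable (p i))
    (pm pM : Fin N → ℝ) (hpm : ∀ i, 1 < pm i)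
    (hpb : ∀ᵐ x ∂(volume.restrict Q), ∀ i, pm i ≤ p i x ∧ p i x ≤ pM i)
    (a : (Fin N → ℝ) → ℝ → (Fin N → ℝ) → (Fin N → ℝ))
    (ha_meas : ∀ (s : ℝ) (ξ : Fin N → ℝ), Measurable (fun x => a x s ξ))
    (ha_cont : ∀ᵐ x ∂(volume.restrict Q),
      Continuous (fun sξ : ℝ × (Fin N → ℝ) => a x sξ.1 sξ.2))
    (ahat : Fin N → ℝ → ℝ) (hahat_cont : ∀ i, Continuous (ahat i))
    (hahat_mono : ∀ i, MonotoneOn (ahat i) (Set.Ici 0))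
    (hahat_pos : ∀ i, ∀ t : ℝ, 0 ≤ t → 0 < ahat i t)
    (c : Fin N → (Fin N → ℝ) → ℝ) (hc_meas : ∀ i, Measurable (c i))
    (hc_nonneg : ∀ i, ∀ᵐ x ∂(volume.restrict Q), 0 ≤ c i x)
    (hc_int : ∀ i, ∫⁻ x in Q, ENNReal.ofReal (c i x ^ conjExp (p i x)) < ⊤)
    (hgrowth : ∀ᵐ x ∂(volume.restrict Q), ∀ (s : ℝ) (ξ : Fin N → ℝ) (i : Fin N),
      |a x s ξ i| ≤ ahat i |s| *
        ((∑ j, |ξ j| ^ p j x) ^ (1 / conjExp (p i x)) + c i x))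
    (hmono : ∀ᵐ x ∂(volume.restrict Q), ∀ (s : ℝ) (ξ ξ' : Fin N → ℝ), ξ ≠ ξ' →
      0 < ∑ i, (a x s ξ i - a x s ξ' i) * (ξ i - ξ' i))
    (α : ℝ) (hα : 0 < α)
    (hcoer : ∀ᵐ x ∂(volume.restrict Q), ∀ (s : ℝ) (ξ : Fin N → ℝ),
      α * ∑ i, |ξ i| ^ p i x ≤ ∑ i, a x s ξ i * ξ i)
    (k : ℝ) (hk : 0 < k)
    (w : ℕ → (Fin N → ℝ) → ℝ) (hw_meas : ∀ m, Measurable (w m))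
    (wlim : (Fin N → ℝ) → ℝ) (hwlim_meas : Measurable wlim)
    (hw_bd : ∀ m, ∀ᵐ x ∂(volume.restrict Q), |w m x| ≤ k)
    (hw_ae : ∀ᵐ x ∂(volume.restrict Q),
      Tendsto (fun m => w m x) atTop (nhds (wlim x)))
    (v : ℕ → (Fin N → ℝ) → Fin N → ℝ) (hv_meas : ∀ m, Measurable (v m))
    (vlim : (Fin N → ℝ) → Fin N → ℝ) (hvlim_meas : Measurable vlim)
    (B : ℝ≥0∞) (hB : B < ⊤)
    (hv_mod : ∀ m, ∫⁻ x in Q, ENNReal.ofReal (∑ i, |v m x i| ^ p i x) ≤ B)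
    (hvlim_mod : ∫⁻ x in Q, ENNReal.ofReal (∑ i, |vlim x i| ^ p i x) < ⊤)
    (hlim : Tendsto (fun m => ∫ x in Q,
        ∑ i, (a x (w m x) (v m x) i - a x (w m x) (vlim x) i) * (v m x i - vlim x i))
      atTop (nhds 0)) :
    ∃ φ : ℕ → ℕ, StrictMono φ ∧
      ∀ i : Fin N,
        Tendsto (fun m => ∫⁻ x in Q,
            ENNReal.ofReal (|v (φ m) x i - vlim x i| ^ p i x))
          atTop (nhds 0) := by
  set μ := (volume : Measure (Fin N → ℝ)).restrict Q with hμ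
  set D : ℕ → (Fin N → ℝ) → ℝ := fun m x =>
    ∑ i, (a x (w m x) (v m x) i - a x (w m x) (vlim x) i) * (v m x i - vlim x i) with hDdef
  set A : Fin N → ℝ := fun i => ahat i k with hAdef
  have hA : ∀ i, 0 ≤ A i := fun i => (hahat_pos i k hk.le).le
  set Sv : (Fin N → ℝ) → ℝ := fun x => ∑ i, |vlim x i| ^ p i x with hSv
  set Z : (Fin N → ℝ) → ℝ := fun x => ∑ i, c i x ^ conjExp (p i x) with hZdef
  -- structural facts at almost every point
  have hc_nn : ∀ᵐ x ∂μ, ∀ i, 0 ≤ c i x := ae_all_iff.2 hc_nonneg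
  have hwb : ∀ᵐ x ∂μ, ∀ m, |w m x| ≤ k := ae_all_iff.2 hw_bd
  have hgr : ∀ᵐ x ∂μ, ∀ m (ξ : Fin N → ℝ) i, |a x (w m x) ξ i| ≤
      A i * ((∑ j, |ξ j| ^ p j x) ^ (1 / conjExp (p i x)) + c i x) := by
    filter_upwards [hgrowth, hc_nn, hwb] with x h1 h2 h3 m ξ i
    refine (h1 (w m x) ξ i).trans (mul_le_mul_of_nonneg_right ?_ ?_)
    · exact hahat_mono i (Set.mem_Ici.2 (abs_nonneg _)) (Set.mem_Ici.2 hk.le) (h3 m)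
    · exact add_nonneg (Real.rpow_nonneg (Finset.sum_nonneg fun j _ =>
        Real.rpow_nonneg (abs_nonneg _) _) _) (h2 i)
  obtain ⟨C, hC0, hC⟩ := ptwise_lower pm pM A hpm hA α hα
  have hlow : ∀ᵐ x ∂μ, ∀ m, α / 2 * ∑ i, |v m x i| ^ p i x ≤ D m x + C * (Sv x + Z x) := by
    filter_upwards [hgr, hc_nn, hpb, hcoer] with x h1 h2 h3 h4 m
    exact hC (fun i => p i x) (fun i => c i x) _ _ _ _ h3 h2 (h1 m _) (h1 m _) (h4 _ _) (h4 _ _)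
  have hup : ∀ᵐ x ∂μ, ∀ m, |D m x| ≤ (∑ i, A i * 16) *
      (∑ i, |v m x i| ^ p i x + (Sv x + Z x)) := by
    filter_upwards [hgr, hc_nn, hpb] with x h1 h2 h3 m
    exact ptwise_upper A hA (fun i => p i x) (fun i => c i x) _ _ _ _
      (fun i => lt_of_lt_of_le (hpm i) (h3 i).1) h2 (h1 m _) (h1 m _)
  have hD0 : ∀ᵐ x ∂μ, ∀ m, 0 ≤ D m x := by
    filter_upwards [hmono] with x h1 m
    by_cases h : v m x = vlim x
    · simp [hDdef, h]
    · exact (h1 _ _ _ h).le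
  -- measurability
  have hpow : ∀ (u : (Fin N → ℝ) → Fin N → ℝ), Measurable u → ∀ i,
      Measurable (fun x => |u x i| ^ p i x) := fun u hu i => by
    have h1 : Measurable (fun x => u x i) := (measurable_pi_apply i).comp hu
    have h2 : Measurable (fun x => |u x i|) := by fun_prop
    exact h2.pow (hp i)
  have hSm : ∀ (u : (Fin N → ℝ) → Fin N → ℝ), Measurable u →
      Measurable (fun x => ∑ i, |u x i| ^ p i x) := fun u hu =>
    Finset.measurable_sum _ fun i _ => hpow u hu i
  have hcm : ∀ i, Measurable (fun x => c i x ^ conjExp (p i x)) := fun i =>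
    (hc_meas i).pow ((hp i).div ((hp i).sub measurable_const))
  have hZm : Measurable Z := Finset.measurable_sum _ fun i _ => hcm i
  have hDm : ∀ m, AEMeasurable (D m) μ := by
    intro m
    have h1 := aemeasurable_pi_iff.1 (carath_meas μ a ha_meas ha_cont (w m) (hw_meas m) (v m) (hv_meas m))
    have h2 := aemeasurable_pi_iff.1 (carath_meas μ a ha_meas ha_cont (w m) (hw_meas m) vlim hvlim_meas)
    refine Finset.aemeasurable_fun_sum _ fun i _ => ((h1 i).sub (h2 i)).mul ?_
    exact (((measurable_pi_apply i).comp (hv_meas m)).sub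
      ((measurable_pi_apply i).comp hvlim_meas)).aemeasurable
  -- integrability
  have hS0 : ∀ (u : (Fin N → ℝ) → Fin N → ℝ) x, 0 ≤ ∑ i, |u x i| ^ p i x := fun u x =>
    Finset.sum_nonneg fun i _ => Real.rpow_nonneg (abs_nonneg _) _
  have hSvi : Integrable Sv μ := integrable_of_nonneg_lintegral (hSm _ hvlim_meas)
    (Eventually.of_forall fun x => hS0 _ x) hvlim_mod
  have hSmi : ∀ m, Integrable (fun x => ∑ i, |v m x i| ^ p i x) μ := fun m =>
    integrable_of_nonneg_lintegral (hSm _ (hv_meas m))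
      (Eventually.of_forall fun x => hS0 _ x) ((hv_mod m).trans_lt hB)
  have hZi : Integrable Z μ := by
    refine integrable_finsetSum _ fun i _ =>
      integrable_of_nonneg_lintegral (hcm i) ?_ (hc_int i)
    filter_upwards [hc_nn] with x hx
    exact Real.rpow_nonneg (hx i) _
  have hDi : ∀ m, Integrable (D m) μ := by
    intro m
    refine Integrable.mono' (((hSmi m).add (hSvi.add hZi)).const_mul (∑ i, A i * 16))
      (hDm m).aestronglyMeasurable ?_
    filter_upwards [hup] with x hx
    exact hx m
  -- convergence of `D` in `L¹`
  have hDl : Tendsto (fun m => ∫⁻ x, ENNReal.ofReal (D m x) ∂μ) atTop (nhds 0) := by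
    have h : ∀ m, ∫⁻ x, ENNReal.ofReal (D m x) ∂μ = ENNReal.ofReal (∫ x, D m x ∂μ) := fun m =>
      (ofReal_integral_eq_lintegral_ofReal (hDi m) (by
        filter_upwards [hD0] with x hx using hx m)).symm
    simp only [h]
    simpa using ENNReal.tendsto_ofReal hlim
  have hDmeas : TendstoInMeasure μ D atTop (fun _ => (0 : ℝ)) := by
    refine tendstoInMeasure_of_tendsto_eLpNorm (p := 1) one_ne_zero
      (fun m => (hDm m).aestronglyMeasurable) aestronglyMeasurable_const ?_
    refine hDl.congr fun m => ?_
    rw [eLpNorm_one_eq_lintegral_enorm]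
    refine lintegral_congr_ae ?_
    filter_upwards [hD0] with x hx
    simp [Real.enorm_of_nonneg (hx m)]
  obtain ⟨φ, hφ, hae⟩ := hDmeas.exists_seq_tendsto_ae
  refine ⟨φ, hφ, fun i => ?_⟩
  have hconv : ∀ᵐ x ∂μ, Tendsto (fun m => v (φ m) x) atTop (nhds (vlim x)) := by
    filter_upwards [hae, hlow, hpb, hmono, ha_cont, hw_ae] with x h1 h2 h3 h4 h5 h6
    exact ptwise_tendsto (a x) h5 h4 (fun i => p i x)
      (fun i => lt_of_lt_of_le (hpm i) (h3 i).1) (fun m => w (φ m) x) (wlim x)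
      (h6.comp hφ.tendsto_atTop) (fun m => v (φ m) x) (vlim x) h1 (C * (Sv x + Z x))
      (α / 2) (by positivity) (fun m => h2 (φ m))
  set L : ℝ := 2 ^ pM i with hL
  have hL0 : 0 ≤ L := by positivity
  set L1 : ℝ := L * (2 / α) with hL1
  have hL10 : 0 ≤ L1 := by positivity
  refine gen_dom μ _ (fun m => ?_) (fun m x => ENNReal.ofReal L1 * ENNReal.ofReal (D (φ m) x))
    (fun m => ?_) (fun x => ENNReal.ofReal (L1 * (C * (Sv x + Z x)) + L * Sv x)) ?_ ?_
    (fun m => ?_) ?_ ?_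
  · have := hpow (fun x => v (φ m) x - vlim x) ((hv_meas _).sub hvlim_meas) i
    exact this.ennreal_ofReal.aemeasurable
  · exact (hDm _).ennreal_ofReal.const_mul _
  · have := hSm _ hvlim_meas
    exact (((this.add hZm).const_mul C).const_mul L1 |>.add (this.const_mul L)).ennreal_ofReal
  · have hi : Integrable (fun x => L1 * (C * (Sv x + Z x)) + L * Sv x) μ :=
      (((hSvi.add hZi).const_mul C).const_mul L1).add (hSvi.const_mul L)
    exact (lt_of_le_of_lt (lintegral_mono fun x => Real.ofReal_le_enorm _) hi.2).ne
  · filter_upwards [hlow, hpb, hD0, hc_nn] with x h1 h2 h3 h4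
    have hZ0 : 0 ≤ Z x := Finset.sum_nonneg fun i _ => Real.rpow_nonneg (h4 i) _
    have hSv0 : 0 ≤ Sv x := hS0 vlim x
    rw [← ENNReal.ofReal_mul hL10, ← ENNReal.ofReal_add (mul_nonneg hL10 (h3 _)) (by positivity)]
    refine ENNReal.ofReal_le_ofReal ?_
    refine (ptwise_diff (lt_of_lt_of_le (hpm i) (h2 i).1) (h2 i).2).trans ?_
    have l1 : |v (φ m) x i| ^ p i x ≤ ∑ i, |v (φ m) x i| ^ p i x :=
      Finset.single_le_sum (f := fun i => |v (φ m) x i| ^ p i x)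
        (fun i _ => Real.rpow_nonneg (abs_nonneg _) _) (Finset.mem_univ i)
    have l2 : |vlim x i| ^ p i x ≤ Sv x :=
      Finset.single_le_sum (f := fun i => |vlim x i| ^ p i x)
        (fun i _ => Real.rpow_nonneg (abs_nonneg _) _) (Finset.mem_univ i)
    have l3 : |v (φ m) x i| ^ p i x ≤ 2 / α * (D (φ m) x + C * (Sv x + Z x)) := by
      refine l1.trans ?_
      have := mul_le_mul_of_nonneg_left (h1 (φ m)) (show 0 ≤ 2 / α by positivity)
      rw [← mul_assoc, show 2 / α * (α / 2) = 1 by field_simp, one_mul] at this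
      exact this
    calc L * (|v (φ m) x i| ^ p i x + |vlim x i| ^ p i x)
        ≤ L * (2 / α * (D (φ m) x + C * (Sv x + Z x)) + Sv x) :=
          mul_le_mul_of_nonneg_left (add_le_add l3 l2) hL0
      _ = _ := by rw [hL1]; ring
  · simp only [lintegral_const_mul' _ _ ENNReal.ofReal_ne_top]
    have := ENNReal.Tendsto.const_mul (a := ENNReal.ofReal L1) (hDl.comp hφ.tendsto_atTop)
      (Or.inr ENNReal.ofReal_ne_top)
    simpa using this
  · filter_upwards [hconv, hpb] with x h1 h2
    have hp0 : 0 < p i x := by linarith [hpm i, (h2 i).1]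
    have h3 : Tendsto (fun m => |v (φ m) x i - vlim x i|) atTop (nhds 0) := by
      have := ((tendsto_pi_nhds.1 h1 i).sub_const (vlim x i)).abs
      simpa using this
    have h4 := h3.rpow_const (p := p i x) (Or.inr hp0.le)
    rw [Real.zero_rpow hp0.ne'] at h4
    simpa using ENNReal.tendsto_ofReal h4
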